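/- Fix d, n ∈ ℕ, T > 0, p ∈ (1,∞), α ∈ (0,1) and A > 0. There exists a constant C, depending only on d, n, p, α and A, and for each R ∈ (0,1] a constant C_R, depending additionally on R and T, such that the following holds: for every x_0 ∈ ℝ^d, every smooth κ : [0,T] → [0,1], and every map u = (u^1,…,u^n) : [0,T]×ℝ^d → ℝ^n, continuous and twice continuously differentiable in x, with ||u||_{L^∞} ≤ A, sup_{t∈[0,T]} sup_{x≠x'} |u(t,x)−u(t,x')|/|x−x'|^α ≤ A, and ∫_0^T ∫_{B_{4R}(x_0)} (|Du|^{2p} + |D²u|^p) dx dt < ∞, one has ∫_0^T ∫_{B_{2R}(x_0)} κ(t)^p |Du(t,x)|^{2p} dx dt ≤ C R^α ( ∫_0^T ∫_{B_{4R}(x_0)} κ(t)^p |D²u(t,x)|^p dx dt + ∫_0^T ∫_{B_{4R}(x_0)} κ(t)^p |Du(t,x)|^{2p} dx dt ) + C_R. -/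

import Mathlib

open Set MeasureTheory

noncomputable section

/-- `ℝ^d` with the Euclidean norm. -/
abbrev Ed (d : ℕ) := EuclideanSpace ℝ (Fin d)

/-- Euclidean norm of a tuple `z = (z^1, …, z^n) ∈ (ℝ^d)^n`. -/
def znorm {n d : ℕ} (z : Fin n → Ed d) : ℝ := Real.sqrt (∑ i, ‖z i‖ ^ 2)

/-- Euclidean norm of a tuple of `d × d` matrices (all second derivatives). -/
def hnorm {n d : ℕ} (H : Fin n → Matrix (Fin d) (Fin d) ℝ) : ℝ :=
  Real.sqrt (∑ i, ∑ j, ∑ l, (H i j l) ^ 2)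

lemma young_aux {p x y : ℝ} (hp : 1 < p) (hx : 0 ≤ x) (hy : 0 ≤ y) :
    y ^ (p - 1) * x ≤ x ^ p + y ^ p := by
  have hxp := Real.rpow_nonneg hx p
  have hyp := Real.rpow_nonneg hy p
  have key : ∀ z : ℝ, 0 ≤ z → z ^ (p - 1) * z = z ^ p := by
    intro z hz
    rcases hz.eq_or_lt with rfl | hz
    · rw [Real.zero_rpow (by linarith : p ≠ 0)]; simp
    · rw [← Real.rpow_add_one hz.ne']; congr 1; ring
  rcases le_total x y with h | h
  · have : y ^ (p - 1) * x ≤ y ^ (p - 1) * y :=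
      mul_le_mul_of_nonneg_left h (Real.rpow_nonneg hy _)
    rw [key y hy] at this; linarith
  · have h1 : y ^ (p - 1) ≤ x ^ (p - 1) := Real.rpow_le_rpow hy h (by linarith)
    have : y ^ (p - 1) * x ≤ x ^ (p - 1) * x := mul_le_mul_of_nonneg_right h1 hx
    rw [key x hx] at this; linarith

lemma rpow_one_add_le {p S : ℝ} (hp : 1 < p) (hS : 0 ≤ S) :
    (1 + S ^ 2) ^ p ≤ 2 ^ p * (1 + S ^ (2 * p)) := by
  have h2 : S ^ (2 * p) = (S ^ 2) ^ p := by
    rw [Real.rpow_mul hS]; norm_num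
  have h2p : (0:ℝ) ≤ 2 ^ p := by positivity
  have hSp : (0:ℝ) ≤ (S ^ 2) ^ p := by positivity
  rw [h2]
  rcases le_total (S ^ 2) 1 with h | h
  · have : (1 + S ^ 2) ^ p ≤ 2 ^ p :=
      Real.rpow_le_rpow (by positivity) (by linarith) (by linarith)
    nlinarith
  · have : (1 + S ^ 2) ^ p ≤ (2 * S ^ 2) ^ p :=
      Real.rpow_le_rpow (by positivity) (by linarith) (by linarith)
    rw [Real.mul_rpow (by norm_num) (by positivity)] at this
    nlinarith

lemma point_aux {p S H M W N η η' a b q w : ℝ} (hp : 1 < p) (hS : 0 ≤ S) (hH : 0 ≤ H)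
    (hM : 0 ≤ M) (hN : 0 ≤ N) (hη0 : 0 ≤ η) (hη1 : η ≤ 1) (hη' : |η'| ≤ M)
    (ha : |a| ≤ S) (hb : |b| ≤ H) (hq : |q| ≤ N * S * H) (hw : |w| ≤ W) :
    -((η' * ((1 + S ^ 2) ^ (p - 1) * a) + η * ((2 * q * (p - 1) * (1 + S ^ 2) ^ (p - 1 - 1)) * a
      + (1 + S ^ 2) ^ (p - 1) * b)) * w) ≤
      W * ((2 * (p - 1) * N + 3) * 2 ^ p * H ^ p + (2 * (p - 1) * N + 3) * 2 ^ p * S ^ (2 * p)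
        + ((2 * (p - 1) * N + 3) * 2 ^ p + (M ^ 2) ^ p)) := by
  have hG : 0 < 1 + S ^ 2 := by positivity
  set G := 1 + S ^ 2 with hGdef
  set P := G ^ (p - 1) with hP
  have hP0 : 0 < P := Real.rpow_pos_of_pos hG _
  set Q := G ^ (p - 1 - 1) with hQ
  have hQ0 : 0 < Q := Real.rpow_pos_of_pos hG _
  have hQG : Q * G = P := by
    rw [hQ, hP, ← Real.rpow_add_one hG.ne']; congr 1; ring
  have hPG : P * G = G ^ p := by
    rw [hP, ← Real.rpow_add_one hG.ne']; congr 1; ring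
  have hc : 0 ≤ 2 * (p - 1) * N := by have : 0 ≤ p - 1 := by linarith
                                      positivity
  have hp1 : 0 ≤ p - 1 := by linarith
  have hW : 0 ≤ W := (abs_nonneg w).trans hw
  -- young
  have y1 : P * H ≤ H ^ p + G ^ p := young_aux hp hH hG.le
  have y2 : P * M ^ 2 ≤ (M ^ 2) ^ p + G ^ p := young_aux hp (by positivity) hG.le
  have y3 : G ^ p ≤ 2 ^ p * (1 + S ^ (2 * p)) := rpow_one_add_le hp hS
  have e1 : |η' * (P * a)| ≤ (M ^ 2) ^ p + 2 * G ^ p := by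
    rw [abs_mul, abs_mul, abs_of_pos hP0]
    have : |η'| * (P * |a|) ≤ M * (P * S) := by gcongr
    have h2 : M * S ≤ M ^ 2 + G := by nlinarith [sq_nonneg (M - S)]
    have h3 : P * (M * S) ≤ P * (M ^ 2 + G) := by gcongr
    nlinarith
  have e2 : |(2 * q * (p - 1) * Q) * a| ≤ 2 * (p - 1) * N * (P * H) := by
    rw [abs_mul, abs_mul, abs_mul, abs_mul, abs_of_pos hQ0, abs_of_nonneg hp1, abs_two]
    have : 2 * |q| * (p - 1) * Q * |a| ≤ 2 * (N * S * H) * (p - 1) * Q * S := by gcongr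
    have h2 : Q * S ^ 2 ≤ P := by rw [← hQG]; gcongr; linarith
    have h3 : 2 * (p - 1) * N * H * (Q * S ^ 2) ≤ 2 * (p - 1) * N * H * P := by gcongr
    nlinarith
  have e3 : |P * b| ≤ P * H := by
    rw [abs_mul, abs_of_pos hP0]; gcongr
  have e4 : |η * ((2 * q * (p - 1) * Q) * a + P * b)| ≤ (2 * (p - 1) * N + 1) * (P * H) := by
    rw [abs_mul, abs_of_nonneg hη0]
    have := abs_add_le ((2 * q * (p - 1) * Q) * a) (P * b)
    calc _ ≤ 1 * |(2 * q * (p - 1) * Q) * a + P * b| := by gcongr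
      _ ≤ _ := by linarith
  have e5 := abs_add_le (η' * (P * a)) (η * ((2 * q * (p - 1) * Q) * a + P * b))
  set F := η' * (P * a) + η * ((2 * q * (p - 1) * Q) * a + P * b) with hF
  set c := 2 * (p - 1) * N with hcdef
  have h2p : (1:ℝ) ≤ 2 ^ p := Real.one_le_rpow (by norm_num) (by linarith)
  have hHp : 0 ≤ H ^ p := Real.rpow_nonneg hH _
  have e6 : |F| ≤ (c + 3) * 2 ^ p * H ^ p + (c + 3) * 2 ^ p * S ^ (2 * p)
        + ((c + 3) * 2 ^ p + (M ^ 2) ^ p) := by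
    have f1 : (c + 1) * (P * H) ≤ (c + 1) * (H ^ p + G ^ p) := by gcongr
    have f2 : (c + 3) * G ^ p ≤ (c + 3) * (2 ^ p * (1 + S ^ (2 * p))) := by gcongr
    have f3 : (c + 1) * H ^ p ≤ (c + 3) * 2 ^ p * H ^ p := by
      have : c + 1 ≤ (c + 3) * 2 ^ p := by nlinarith
      exact mul_le_mul_of_nonneg_right this hHp
    linarith
  calc -(F * w) ≤ |F * w| := neg_le_abs _
    _ = |w| * |F| := by rw [abs_mul, mul_comm]
    _ ≤ _ := by gcongr

lemma cutoff_aux (d : ℕ) (R : ℝ) (hR : 0 < R) : ∃ M : ℝ, 0 ≤ M ∧ ∀ x0 : Ed d,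
    ∃ (η : Ed d → ℝ) (η' : Fin d → Ed d → ℝ), Continuous η ∧ (∀ j, Continuous (η' j)) ∧
      (∀ x, 0 ≤ η x) ∧ (∀ x, η x ≤ 1) ∧ (∀ x ∈ Metric.ball x0 (2 * R), η x = 1) ∧
      (∀ x ∉ Metric.closedBall x0 (3 * R), η x = 0) ∧
      (∀ j, ∀ x ∉ Metric.closedBall x0 (3 * R), η' j x = 0) ∧
      (∀ j x, |η' j x| ≤ M) ∧
      (∀ j x, HasLineDerivAt ℝ η (η' j x) x (EuclideanSpace.single j 1)) := by
  let f : ContDiffBump (0 : Ed d) := ⟨2 * R, 3 * R, by linarith, by linarith⟩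
  have hf : ContDiff ℝ 1 f := f.contDiff
  have hfd : Continuous (fderiv ℝ f) := hf.continuous_fderiv (by norm_num)
  have hfc : HasCompactSupport (fderiv ℝ f) := f.hasCompactSupport.fderiv ℝ
  obtain ⟨M, hM⟩ := hfd.bounded_above_of_compact_support hfc
  have hMn : 0 ≤ M := (norm_nonneg _).trans (hM 0)
  refine ⟨M, hMn, fun x0 => ⟨fun x => f (x - x0),
    fun j x => fderiv ℝ f (x - x0) (EuclideanSpace.single j 1), ?_, ?_, ?_, ?_, ?_, ?_, ?_, ?_, ?_⟩⟩
  · exact f.continuous.comp (by fun_prop)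
  · intro j
    exact (hfd.comp (by fun_prop : Continuous fun x : Ed d => x - x0)).clm_apply continuous_const
  · intro x; exact f.nonneg
  · intro x; exact f.le_one
  · intro x hx
    apply f.one_of_mem_closedBall
    simp only [Metric.mem_ball, dist_eq_norm, Metric.mem_closedBall, sub_zero] at hx ⊢
    exact hx.le
  · intro x hx
    apply f.zero_of_le_dist
    simp only [dist_eq_norm, Metric.mem_closedBall, sub_zero, not_le] at hx ⊢
    exact hx.le
  · intro j x hx
    have : x - x0 ∉ tsupport (fderiv ℝ f) := by
      intro h
      have h2 := tsupport_fderiv_subset ℝ h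
      rw [f.tsupport_eq] at h2
      simp only [dist_eq_norm, Metric.mem_closedBall, sub_zero] at hx h2
      exact hx h2
    simp [image_eq_zero_of_notMem_tsupport this]
  · intro j x
    calc _ ≤ ‖fderiv ℝ f (x - x0)‖ * ‖(EuclideanSpace.single j 1 : Ed d)‖ :=
        (fderiv ℝ f (x - x0)).le_opNorm _
      _ ≤ M := by simpa using hM _
  · intro j x
    have h1 : HasFDerivAt f (fderiv ℝ f (x - x0)) (x - x0) :=
      (hf.differentiable (by norm_num) _).hasFDerivAt
    have h2 : HasFDerivAt (fun x => f (x - x0)) (fderiv ℝ f (x - x0)) x :=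
      (hasFDerivAt_comp_sub x0).2 h1
    exact h2.hasLineDerivAt _

lemma znorm_nonneg {n d : ℕ} (z : Fin n → Ed d) : 0 ≤ znorm z := Real.sqrt_nonneg _

lemma hnorm_nonneg {n d : ℕ} (H : Fin n → Matrix (Fin d) (Fin d) ℝ) : 0 ≤ hnorm H :=
  Real.sqrt_nonneg _

lemma znorm_sq {n d : ℕ} (z : Fin n → Ed d) : znorm z ^ 2 = ∑ i, ∑ j, (z i j) ^ 2 := by
  rw [znorm, Real.sq_sqrt (by positivity)]
  simp [EuclideanSpace.norm_sq_eq]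

lemma abs_le_znorm {n d : ℕ} (z : Fin n → Ed d) (i : Fin n) (j : Fin d) :
    |z i j| ≤ znorm z := by
  refine abs_le_of_sq_le_sq ?_ (znorm_nonneg z)
  rw [znorm_sq]
  calc (z i j) ^ 2 ≤ ∑ j, (z i j) ^ 2 :=
      Finset.single_le_sum (f := fun j => (z i j) ^ 2) (fun _ _ => sq_nonneg _) (Finset.mem_univ j)
    _ ≤ _ := Finset.single_le_sum (f := fun i => ∑ j, (z i j) ^ 2)
      (fun _ _ => by positivity) (Finset.mem_univ i)

lemma abs_le_hnorm {n d : ℕ} (H : Fin n → Matrix (Fin d) (Fin d) ℝ) (i : Fin n) (j l : Fin d) :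
    |H i j l| ≤ hnorm H := by
  apply Real.abs_le_sqrt
  calc (H i j l) ^ 2 ≤ ∑ l, (H i j l) ^ 2 :=
      Finset.single_le_sum (f := fun l => (H i j l) ^ 2) (fun _ _ => sq_nonneg _)
        (Finset.mem_univ l)
    _ ≤ ∑ j, ∑ l, (H i j l) ^ 2 := Finset.single_le_sum (f := fun j => ∑ l, (H i j l) ^ 2)
      (fun _ _ => by positivity) (Finset.mem_univ j)
    _ ≤ _ := Finset.single_le_sum (f := fun i => ∑ j, ∑ l, (H i j l) ^ 2)
      (fun _ _ => by positivity) (Finset.mem_univ i)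

lemma continuous_znorm {n d : ℕ} : Continuous (znorm : (Fin n → Ed d) → ℝ) := by
  unfold znorm; fun_prop

lemma continuous_hnorm {n d : ℕ} :
    Continuous (hnorm : (Fin n → Matrix (Fin d) (Fin d) ℝ) → ℝ) := by
  unfold hnorm
  refine Real.continuous_sqrt.comp ?_
  refine continuous_finsetSum _ fun i _ => continuous_finsetSum _ fun j _ =>
    continuous_finsetSum _ fun l _ => ?_
  exact ((continuous_apply i).matrix_elem j l).pow 2

lemma cross_aux {n d : ℕ} (z : Fin n → Ed d) (H : Fin n → Matrix (Fin d) (Fin d) ℝ) (j : Fin d) :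
    |∑ k, ∑ l, z k l * H k l j| ≤ (n * d : ℝ) * znorm z * hnorm H := by
  calc |∑ k, ∑ l, z k l * H k l j| ≤ ∑ k : Fin n, ∑ l : Fin d, znorm z * hnorm H := by
        refine (Finset.abs_sum_le_sum_abs _ _).trans (Finset.sum_le_sum fun k _ => ?_)
        refine (Finset.abs_sum_le_sum_abs _ _).trans (Finset.sum_le_sum fun l _ => ?_)
        rw [abs_mul]
        exact mul_le_mul (abs_le_znorm z k l) (abs_le_hnorm H k l j) (abs_nonneg _)
          (znorm_nonneg z)
    _ = _ := by simp; ring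

lemma grad_line {d : ℕ} {f : Ed d → ℝ} {g x : Ed d} (h : HasGradientAt f g x) (j : Fin d) :
    HasLineDerivAt ℝ f (g j) x (EuclideanSpace.single j 1) := by
  have := (hasGradientAt_iff_hasFDerivAt.1 h).hasLineDerivAt (EuclideanSpace.single j 1)
  simpa [EuclideanSpace.inner_single_right] using this

lemma slice_ij {d n : ℕ} {p : ℝ} (hp : 1 < p) {R M W : ℝ} (hM : 0 ≤ M)
    (hR : 0 < R) (x0 : Ed d) (v : Ed d → EuclideanSpace ℝ (Fin n)) (Dv : Ed d → Fin n → Ed d)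
    (D2v : Ed d → Fin n → Matrix (Fin d) (Fin d) ℝ)
    (cv : Continuous v) (cDv : Continuous Dv) (cD2v : Continuous D2v)
    (h1 : ∀ (x : Ed d) (i : Fin n), HasGradientAt (fun x' => v x' i) (Dv x i) x)
    (h2 : ∀ (x : Ed d) (i : Fin n) (j : Fin d), HasGradientAt (fun x' => Dv x' i j)
            ((EuclideanSpace.equiv (Fin d) ℝ).symm (D2v x i j)) x)
    (hW : ∀ x ∈ Metric.ball x0 (4 * R), ∀ i, |v x i - v x0 i| ≤ W)
    (η : Ed d → ℝ) (η' : Fin d → Ed d → ℝ) (cη : Continuous η) (cη' : ∀ j, Continuous (η' j))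
    (hη0 : ∀ x, 0 ≤ η x) (hη1 : ∀ x, η x ≤ 1)
    (hηz : ∀ x ∉ Metric.closedBall x0 (3 * R), η x = 0)
    (hηz' : ∀ j, ∀ x ∉ Metric.closedBall x0 (3 * R), η' j x = 0)
    (hηM : ∀ j x, |η' j x| ≤ M)
    (hηd : ∀ j x, HasLineDerivAt ℝ η (η' j x) x (EuclideanSpace.single j 1))
    (i : Fin n) (j : Fin d) :
    Integrable (fun x => η x * ((1 + znorm (Dv x) ^ 2) ^ (p - 1) * Dv x i j) * Dv x i j) ∧
    ∫ x, η x * ((1 + znorm (Dv x) ^ 2) ^ (p - 1) * Dv x i j) * Dv x i j ≤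
      ∫ x in Metric.ball x0 (4 * R), W * ((2 * (p - 1) * (n * d : ℝ) + 3) * 2 ^ p * hnorm (D2v x) ^ p
        + (2 * (p - 1) * (n * d : ℝ) + 3) * 2 ^ p * znorm (Dv x) ^ (2 * p)
        + ((2 * (p - 1) * (n * d : ℝ) + 3) * 2 ^ p + (M ^ 2) ^ p)) := by
  have cS : Continuous fun x => znorm (Dv x) := continuous_znorm.comp cDv
  have cH : Continuous fun x => hnorm (D2v x) := continuous_hnorm.comp cD2v
  have hG : ∀ x, 0 < 1 + znorm (Dv x) ^ 2 := fun x => by positivity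
  have cG : ∀ r : ℝ, Continuous fun x => (1 + znorm (Dv x) ^ 2) ^ r := fun r =>
    (by fun_prop : Continuous fun x => 1 + znorm (Dv x) ^ 2).rpow_const
      fun x => Or.inl (hG x).ne'
  have ca : ∀ k l, Continuous fun x => Dv x k l := by
    intro k l
    have : Continuous fun x => Dv x k := (continuous_apply k).comp cDv
    fun_prop
  have cb : ∀ k l m, Continuous fun x => D2v x k l m := by
    intro k l m
    exact ((continuous_apply k).comp cD2v).matrix_elem l m
  have cw : Continuous fun x => v x i - v x0 i := by fun_prop
  have cq : Continuous fun x => ∑ k, ∑ l, Dv x k l * D2v x k l j :=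
    continuous_finsetSum _ fun k _ => continuous_finsetSum _ fun l _ => (ca k l).mul (cb k l j)
  set f : Ed d → ℝ := fun x => η x * ((1 + znorm (Dv x) ^ 2) ^ (p - 1) * Dv x i j) with hf
  set f' : Ed d → ℝ := fun x => η' j x * ((1 + znorm (Dv x) ^ 2) ^ (p - 1) * Dv x i j) +
    η x * ((2 * (∑ k, ∑ l, Dv x k l * D2v x k l j) * (p - 1) *
      (1 + znorm (Dv x) ^ 2) ^ (p - 1 - 1)) * Dv x i j
      + (1 + znorm (Dv x) ^ 2) ^ (p - 1) * D2v x i j j) with hf'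
  set w : Ed d → ℝ := fun x => v x i - v x0 i with hw
  have cf : Continuous f := cη.mul ((cG _).mul (ca i j))
  have cf' : Continuous f' := ((cη' j).mul ((cG _).mul (ca i j))).add
    (cη.mul (((((continuous_const.mul cq).mul continuous_const).mul (cG _)).mul (ca i j)).add
      ((cG _).mul (cb i j j))))
  have fz : ∀ x ∉ Metric.closedBall x0 (3 * R), f x = 0 := fun x hx => by
    simp [hf, hηz x hx]
  have fz' : ∀ x ∉ Metric.closedBall x0 (3 * R), f' x = 0 := fun x hx => by
    simp [hf', hηz x hx, hηz' j x hx]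
  have hK : IsCompact (Metric.closedBall x0 (3 * R)) := isCompact_closedBall _ _
  have i1 : Integrable fun x => f' x * w x :=
    (cf'.mul cw).integrable_of_hasCompactSupport
      (HasCompactSupport.intro hK fun x hx => by simp [fz' x hx])
  have i2 : Integrable fun x => f x * Dv x i j :=
    (cf.mul (ca i j)).integrable_of_hasCompactSupport
      (HasCompactSupport.intro hK fun x hx => by simp [fz x hx])
  have i3 : Integrable fun x => f x * w x :=
    (cf.mul cw).integrable_of_hasCompactSupport
      (HasCompactSupport.intro hK fun x hx => by simp [fz x hx])
  have dw : ∀ x, HasLineDerivAt ℝ w (Dv x i j) x (EuclideanSpace.single j 1) := fun x =>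
    HasDerivAt.sub_const _ (grad_line (h1 x i) j)
  have dD : ∀ x k l, HasLineDerivAt ℝ (fun x => Dv x k l) (D2v x k l j) x
      (EuclideanSpace.single j 1) := fun x k l => by
    simpa using grad_line (h2 x k l) j
  have df : ∀ x, HasLineDerivAt ℝ f (f' x) x (EuclideanSpace.single j 1) := by
    intro x
    have dG : HasLineDerivAt ℝ (fun x => 1 + znorm (Dv x) ^ 2)
        (2 * ∑ k, ∑ l, Dv x k l * D2v x k l j) x (EuclideanSpace.single j 1) := by
      have : (fun x => 1 + znorm (Dv x) ^ 2) = fun x => 1 + ∑ k, ∑ l, (Dv x k l) ^ 2 := by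
        funext y; rw [znorm_sq]
      rw [this]
      unfold HasLineDerivAt
      have := HasDerivAt.const_add (1:ℝ) (HasDerivAt.fun_sum (u := Finset.univ) fun k _ =>
        HasDerivAt.fun_sum (u := Finset.univ) fun l _ => HasDerivAt.fun_pow (dD x k l) 2)
      convert this using 1
      simp only [Finset.mul_sum]
      refine Finset.sum_congr rfl fun k _ => Finset.sum_congr rfl fun l _ => ?_
      simp; ring
    have dP : HasLineDerivAt ℝ (fun x => (1 + znorm (Dv x) ^ 2) ^ (p - 1))
        (2 * (∑ k, ∑ l, Dv x k l * D2v x k l j) * (p - 1) *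
          (1 + znorm (Dv x) ^ 2) ^ (p - 1 - 1)) x (EuclideanSpace.single j 1) := by
      have := HasDerivAt.rpow_const (p := p - 1) dG (Or.inl (hG _).ne')
      simp only [zero_smul, add_zero] at this
      exact this
    have := HasDerivAt.fun_mul (hηd j x) (HasDerivAt.fun_mul dP (dD x i j))
    simp only [zero_smul, add_zero] at this
    exact this
  have ibp := integral_bilinear_hasLineDerivAt_right_eq_neg_left_of_integrable
    (μ := (volume : Measure (Ed d)))
    (B := ContinuousLinearMap.mul ℝ ℝ) (f := f) (f' := f') (g := w) (g' := fun x => Dv x i j)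
    (v := EuclideanSpace.single j 1) i1 i2 i3 (fun x _ => df x) (fun x _ => dw x)
  simp only [ContinuousLinearMap.mul_apply'] at ibp
  refine ⟨i2, ?_⟩
  rw [ibp, ← integral_neg]
  have hsub : ∀ x, x ∉ Metric.ball x0 (4 * R) → x ∉ Metric.closedBall x0 (3 * R) := by
    intro x hx h
    apply hx
    simp only [Metric.mem_closedBall, Metric.mem_ball] at h ⊢
    linarith
  rw [← setIntegral_eq_integral_of_forall_compl_eq_zero
    (s := Metric.ball x0 (4 * R)) (fun x hx => by simp [fz' x (hsub x hx)])]
  refine setIntegral_mono_on i1.neg.integrableOn ?_ measurableSet_ball ?_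
  · have : Continuous fun x => W * ((2 * (p - 1) * (n * d : ℝ) + 3) * 2 ^ p * hnorm (D2v x) ^ p
        + (2 * (p - 1) * (n * d : ℝ) + 3) * 2 ^ p * znorm (Dv x) ^ (2 * p)
        + ((2 * (p - 1) * (n * d : ℝ) + 3) * 2 ^ p + (M ^ 2) ^ p)) := by
      have c1 := cH.rpow_const (p := p) fun x => Or.inr (by linarith)
      have c2 := cS.rpow_const (p := 2 * p) fun x => Or.inr (by linarith)
      exact continuous_const.mul (((continuous_const.mul c1).add (continuous_const.mul c2)).add
        continuous_const)
    exact (this.continuousOn.integrableOn_compact (isCompact_closedBall x0 (4 * R))).mono_set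
      Metric.ball_subset_closedBall
  · intro x hx
    exact point_aux hp (znorm_nonneg _) (hnorm_nonneg _) hM (by positivity) (hη0 x) (hη1 x)
      (hηM j x) (abs_le_znorm _ i j) (abs_le_hnorm _ i j j) (cross_aux _ _ j) (hW x hx i)

lemma slice {d n : ℕ} {p : ℝ} (hp : 1 < p) {R M W : ℝ} (hM : 0 ≤ M)
    (hR : 0 < R) (x0 : Ed d) (v : Ed d → EuclideanSpace ℝ (Fin n)) (Dv : Ed d → Fin n → Ed d)
    (D2v : Ed d → Fin n → Matrix (Fin d) (Fin d) ℝ)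
    (cv : Continuous v) (cDv : Continuous Dv) (cD2v : Continuous D2v)
    (h1 : ∀ (x : Ed d) (i : Fin n), HasGradientAt (fun x' => v x' i) (Dv x i) x)
    (h2 : ∀ (x : Ed d) (i : Fin n) (j : Fin d), HasGradientAt (fun x' => Dv x' i j)
            ((EuclideanSpace.equiv (Fin d) ℝ).symm (D2v x i j)) x)
    (hW : ∀ x ∈ Metric.ball x0 (4 * R), ∀ i, |v x i - v x0 i| ≤ W)
    (η : Ed d → ℝ) (η' : Fin d → Ed d → ℝ) (cη : Continuous η) (cη' : ∀ j, Continuous (η' j))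
    (hη0 : ∀ x, 0 ≤ η x) (hη1 : ∀ x, η x ≤ 1)
    (hηo : ∀ x ∈ Metric.ball x0 (2 * R), η x = 1)
    (hηz : ∀ x ∉ Metric.closedBall x0 (3 * R), η x = 0)
    (hηz' : ∀ j, ∀ x ∉ Metric.closedBall x0 (3 * R), η' j x = 0)
    (hηM : ∀ j x, |η' j x| ≤ M)
    (hηd : ∀ j x, HasLineDerivAt ℝ η (η' j x) x (EuclideanSpace.single j 1)) :
    ∫ x in Metric.ball x0 (2 * R), znorm (Dv x) ^ (2 * p) ≤
      (n * d : ℝ) * W * ((2 * (p - 1) * (n * d : ℝ) + 3) * 2 ^ p *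
        ((∫ x in Metric.ball x0 (4 * R), hnorm (D2v x) ^ p) +
          ∫ x in Metric.ball x0 (4 * R), znorm (Dv x) ^ (2 * p))
        + ((2 * (p - 1) * (n * d : ℝ) + 3) * 2 ^ p + (M ^ 2) ^ p) *
          volume.real (Metric.ball (0 : Ed d) (4 * R))) := by
  have cS : Continuous fun x => znorm (Dv x) := continuous_znorm.comp cDv
  have cH : Continuous fun x => hnorm (D2v x) := continuous_hnorm.comp cD2v
  have c1 := cH.rpow_const (p := p) fun x => Or.inr (by linarith)
  have c2 := cS.rpow_const (p := 2 * p) fun x => Or.inr (by linarith)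
  have ion : ∀ {f : Ed d → ℝ} (r : ℝ), Continuous f → IntegrableOn f (Metric.ball x0 r) :=
    fun {f} r hf => (hf.continuousOn.integrableOn_compact (isCompact_closedBall x0 r)).mono_set
      Metric.ball_subset_closedBall
  have key := fun i j => slice_ij hp hM hR x0 v Dv D2v cv cDv cD2v h1 h2 hW η η' cη cη' hη0 hη1
    hηz hηz' hηM hηd i j
  set X := ∫ x in Metric.ball x0 (4 * R), W * ((2 * (p - 1) * (n * d : ℝ) + 3) * 2 ^ p *
        hnorm (D2v x) ^ p
        + (2 * (p - 1) * (n * d : ℝ) + 3) * 2 ^ p * znorm (Dv x) ^ (2 * p)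
        + ((2 * (p - 1) * (n * d : ℝ) + 3) * 2 ^ p + (M ^ 2) ^ p)) with hX
  have hXe : (n * d : ℝ) * X = (n * d : ℝ) * W * ((2 * (p - 1) * (n * d : ℝ) + 3) * 2 ^ p *
        ((∫ x in Metric.ball x0 (4 * R), hnorm (D2v x) ^ p) +
          ∫ x in Metric.ball x0 (4 * R), znorm (Dv x) ^ (2 * p))
        + ((2 * (p - 1) * (n * d : ℝ) + 3) * 2 ^ p + (M ^ 2) ^ p) *
          volume.real (Metric.ball (0 : Ed d) (4 * R))) := by
    rw [hX, integral_const_mul, integral_add, integral_add, integral_const_mul, integral_const_mul,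
      setIntegral_const]
    · have : volume.real (Metric.ball x0 (4 * R)) = volume.real (Metric.ball (0 : Ed d) (4 * R)) := by
        simp only [Measure.real, Measure.addHaar_ball_center]
      rw [this, smul_eq_mul]; ring
    · exact ion _ (continuous_const.mul c1)
    · exact ion _ (continuous_const.mul c2)
    · exact ion _ ((continuous_const.mul c1).add (continuous_const.mul c2))
    · exact ion _ continuous_const
  rw [← hXe]
  calc ∫ x in Metric.ball x0 (2 * R), znorm (Dv x) ^ (2 * p)
      ≤ ∫ x in Metric.ball x0 (2 * R), ∑ i, ∑ j,
          η x * ((1 + znorm (Dv x) ^ 2) ^ (p - 1) * Dv x i j) * Dv x i j := by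
        refine setIntegral_mono_on (ion _ c2) ?_ measurableSet_ball ?_
        · exact (integrable_finsetSum _ fun i _ => integrable_finsetSum _ fun j _ =>
            (key i j).1).integrableOn
        · intro x hx
          have e : ∑ i, ∑ j, η x * ((1 + znorm (Dv x) ^ 2) ^ (p - 1) * Dv x i j) * Dv x i j
              = (1 + znorm (Dv x) ^ 2) ^ (p - 1) * znorm (Dv x) ^ 2 := by
            rw [hηo x hx, znorm_sq]
            simp only [Finset.mul_sum]
            refine Finset.sum_congr rfl fun k _ => Finset.sum_congr rfl fun l _ => ?_
            ring
          rw [e]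
          rcases (znorm_nonneg (Dv x)).eq_or_lt with h | h
          · rw [← h, Real.zero_rpow (by linarith)]; simp
          · have e2 : znorm (Dv x) ^ (2 * p) = (znorm (Dv x) ^ 2) ^ (p - 1) * znorm (Dv x) ^ 2 := by
              rw [← Real.rpow_add_one (by positivity), Real.rpow_mul h.le]; norm_num
            rw [e2]
            gcongr
            linarith
    _ ≤ ∫ x, ∑ i, ∑ j, η x * ((1 + znorm (Dv x) ^ 2) ^ (p - 1) * Dv x i j) * Dv x i j := by
        refine setIntegral_le_integral ?_ ?_
        · exact integrable_finsetSum _ fun i _ => integrable_finsetSum _ fun j _ =>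
            (key i j).1
        · refine Filter.Eventually.of_forall fun x => ?_
          refine Finset.sum_nonneg fun i _ => Finset.sum_nonneg fun j _ => ?_
          have : 0 ≤ (1 + znorm (Dv x) ^ 2) ^ (p - 1) := by positivity
          have h3 := mul_nonneg (mul_nonneg (hη0 x) this) (mul_self_nonneg (Dv x i j))
          linarith
    _ = ∑ i, ∑ j, ∫ x, η x * ((1 + znorm (Dv x) ^ 2) ^ (p - 1) * Dv x i j) * Dv x i j := by
        rw [integral_finsetSum _ fun i _ => integrable_finsetSum _ fun j _ => (key i j).1]
        refine Finset.sum_congr rfl fun i _ => ?_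
        rw [integral_finsetSum _ fun j _ => (key i j).1]
    _ ≤ ∑ i : Fin n, ∑ j : Fin d, X :=
        Finset.sum_le_sum fun i _ => Finset.sum_le_sum fun j _ => (key i j).2
    _ = (n * d : ℝ) * X := by simp; ring

/-- The localized Bensoussan–Frehse integration-by-parts
inequality: there is `C = C(d,n,p,α,A)` and, for each `R ∈ (0,1]`, a constant
`C_R` (depending additionally on `R` and `T`), such that for every `x₀`, every
smooth `κ : [0,T] → [0,1]` and every `u` bounded by `A` and `α`-Hölder in space
with constant `A`, twice continuously differentiable in `x`, with
`∫∫_{[0,T]×B_{4R}(x₀)} (|Du|^{2p} + |D²u|^p) < ∞`, one has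
`∫∫_{[0,T]×B_{2R}} κ^p |Du|^{2p} ≤ C R^α (∫∫_{[0,T]×B_{4R}} κ^p |D²u|^p
+ ∫∫_{[0,T]×B_{4R}} κ^p |Du|^{2p}) + C_R`. -/
theorem stmt13 (d n : ℕ) (p α A : ℝ) (hp : 1 < p) (hα : α ∈ Ioo (0:ℝ) 1)
    (hA : 0 < A) :
    ∃ C : ℝ, ∀ T : ℝ, 0 < T → ∀ R ∈ Ioc (0:ℝ) 1, ∃ CR : ℝ,
      ∀ (x0 : Ed d) (κ : ℝ → ℝ) (u : ℝ → Ed d → EuclideanSpace ℝ (Fin n))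
        (Du : ℝ → Ed d → Fin n → Ed d)
        (D2u : ℝ → Ed d → Fin n → Matrix (Fin d) (Fin d) ℝ),
        -- `κ` is smooth with values in `[0,1]`
        ContDiff ℝ (⊤ : ℕ∞) κ → (∀ t, κ t ∈ Icc (0:ℝ) 1) →
        -- `u`, `Du`, `D2u` are continuous
        ContinuousOn (fun q : ℝ × Ed d => u q.1 q.2) (Icc 0 T ×ˢ univ) →
        ContinuousOn (fun q : ℝ × Ed d => Du q.1 q.2) (Icc 0 T ×ˢ univ) →
        ContinuousOn (fun q : ℝ × Ed d => D2u q.1 q.2) (Icc 0 T ×ˢ univ) →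
        -- `Du` and `D2u` are the first and second spatial derivatives of `u`
        (∀ t ∈ Icc (0:ℝ) T, ∀ (x : Ed d) (i : Fin n),
          HasGradientAt (fun x' => u t x' i) (Du t x i) x) →
        (∀ t ∈ Icc (0:ℝ) T, ∀ (x : Ed d) (i : Fin n) (j : Fin d),
          HasGradientAt (fun x' => Du t x' i j)
            ((EuclideanSpace.equiv (Fin d) ℝ).symm (D2u t x i j)) x) →
        -- `‖u‖_∞ ≤ A` and `u` is `α`-Hölder in space with constant `A`
        (∀ t ∈ Icc (0:ℝ) T, ∀ x, ‖u t x‖ ≤ A) →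
        (∀ t ∈ Icc (0:ℝ) T, ∀ x x' : Ed d, ‖u t x - u t x'‖ ≤ A * ‖x - x'‖ ^ α) →
        -- finiteness of the localized integrals
        IntegrableOn
          (fun q : ℝ × Ed d =>
            znorm (Du q.1 q.2) ^ (2 * p) + hnorm (D2u q.1 q.2) ^ p)
          (Icc (0:ℝ) T ×ˢ Metric.ball x0 (4 * R)) →
        ∫ q in Icc (0:ℝ) T ×ˢ Metric.ball x0 (2 * R),
            κ q.1 ^ p * znorm (Du q.1 q.2) ^ (2 * p) ≤
          C * R ^ α *
            ((∫ q in Icc (0:ℝ) T ×ˢ Metric.ball x0 (4 * R),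
                κ q.1 ^ p * hnorm (D2u q.1 q.2) ^ p) +
             (∫ q in Icc (0:ℝ) T ×ˢ Metric.ball x0 (4 * R),
                κ q.1 ^ p * znorm (Du q.1 q.2) ^ (2 * p))) + CR := by
  set N : ℝ := (n * d : ℝ) with hN
  set C2 : ℝ := (2 * (p - 1) * N + 3) * 2 ^ p with hC2
  have hN0 : 0 ≤ N := by positivity
  have hp1 : 0 ≤ p - 1 := by linarith
  have hC20 : 0 ≤ C2 := by positivity
  refine ⟨N * (4 * A) * C2, fun T hT R hR => ?_⟩
  obtain ⟨M, hM, hcut⟩ := cutoff_aux d R hR.1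
  set K : ℝ := N * (4 * A * R ^ α) * ((C2 + (M ^ 2) ^ p) *
    volume.real (Metric.ball (0 : Ed d) (4 * R))) with hK
  have hRα : 0 ≤ R ^ α := Real.rpow_nonneg hR.1.le _
  have hK0 : 0 ≤ K := by positivity
  refine ⟨T * K, ?_⟩
  intro x0 κ u Du D2u cκ hκ cu cDu cD2u h1 h2 hbd hhol _
  obtain ⟨η, η', cη, cη', hη0, hη1, hηo, hηz, hηz', hηM, hηd⟩ := hcut x0
  -- continuity of the integrands
  have cκp : Continuous fun q : ℝ × Ed d => κ q.1 ^ p :=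
    (cκ.continuous.comp continuous_fst).rpow_const fun _ => Or.inr (by linarith)
  have cF : ContinuousOn (fun q : ℝ × Ed d => κ q.1 ^ p * znorm (Du q.1 q.2) ^ (2 * p))
      (Icc 0 T ×ˢ univ) :=
    cκp.continuousOn.mul ((continuous_znorm.comp_continuousOn cDu).rpow_const
      fun _ _ => Or.inr (by linarith))
  have cH : ContinuousOn (fun q : ℝ × Ed d => κ q.1 ^ p * hnorm (D2u q.1 q.2) ^ p)
      (Icc 0 T ×ˢ univ) :=
    cκp.continuousOn.mul ((continuous_hnorm.comp_continuousOn cD2u).rpow_const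
      fun _ _ => Or.inr (by linarith))
  have ion : ∀ {f : ℝ × Ed d → ℝ} (r : ℝ), ContinuousOn f (Icc 0 T ×ˢ univ) →
      IntegrableOn f (Icc (0:ℝ) T ×ˢ Metric.ball x0 r) (volume.prod volume) := by
    intro f r hf
    have h : IntegrableOn f (Icc (0:ℝ) T ×ˢ Metric.closedBall x0 r) (volume.prod volume) :=
      (hf.mono (prod_mono_right (subset_univ _))).integrableOn_compact
        (isCompact_Icc.prod (isCompact_closedBall x0 r))
    exact h.mono_set (prod_mono_right Metric.ball_subset_closedBall)
  have iot : ∀ {f : ℝ × Ed d → ℝ} (r : ℝ), ContinuousOn f (Icc 0 T ×ˢ univ) →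
      IntegrableOn (fun t => ∫ x in Metric.ball x0 r, f (t, x)) (Icc (0:ℝ) T) := by
    intro f r hf
    have h := ion r hf
    rw [IntegrableOn, ← Measure.prod_restrict] at h
    exact h.integral_prod_left
  rw [Measure.volume_eq_prod, setIntegral_prod _ (ion _ cF), setIntegral_prod _ (ion _ cF),
    setIntegral_prod _ (ion _ cH)]
  have hmain : ∀ t ∈ Icc (0:ℝ) T,
      ∫ x in Metric.ball x0 (2 * R), κ t ^ p * znorm (Du t x) ^ (2 * p) ≤
      N * (4 * A) * C2 * R ^ α * ((∫ x in Metric.ball x0 (4 * R), κ t ^ p * hnorm (D2u t x) ^ p) +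
        ∫ x in Metric.ball x0 (4 * R), κ t ^ p * znorm (Du t x) ^ (2 * p)) + K := by
    intro t ht
    have hι : Continuous fun x : Ed d => (t, x) := by fun_prop
    have hm : ∀ x : Ed d, (t, x) ∈ Icc (0:ℝ) T ×ˢ (univ : Set (Ed d)) := fun x => ⟨ht, trivial⟩
    have cu' : Continuous (u t) := cu.comp_continuous hι hm
    have cDu' : Continuous (Du t) := cDu.comp_continuous hι hm
    have cD2u' : Continuous (D2u t) := cD2u.comp_continuous hι hm
    have hW : ∀ x ∈ Metric.ball x0 (4 * R), ∀ i, |u t x i - u t x0 i| ≤ 4 * A * R ^ α := by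
      intro x hx i
      have hx' : ‖x - x0‖ ≤ 4 * R := by
        rw [Metric.mem_ball, dist_eq_norm] at hx; exact hx.le
      have e1 : |u t x i - u t x0 i| ≤ ‖u t x - u t x0‖ := by
        simpa using PiLp.norm_apply_le (u t x - u t x0) i
      have e2 : ‖x - x0‖ ^ α ≤ (4 * R) ^ α :=
        Real.rpow_le_rpow (norm_nonneg _) hx' hα.1.le
      rw [Real.mul_rpow (by norm_num) hR.1.le] at e2
      have e3 : (4:ℝ) ^ α ≤ 4 := by
        simpa using Real.rpow_le_rpow_of_exponent_le (by norm_num : (1:ℝ) ≤ 4) hα.2.le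
      calc _ ≤ _ := e1
        _ ≤ _ := hhol t ht x x0
        _ ≤ A * (4 ^ α * R ^ α) := by gcongr
        _ ≤ A * (4 * R ^ α) := by gcongr
        _ = _ := by ring
    have hs := slice hp hM hR.1 x0 (u t) (Du t) (D2u t) cu' cDu' cD2u' (h1 t ht) (h2 t ht) hW
      η η' cη cη' hη0 hη1 hηo hηz hηz' hηM hηd
    rw [← hN, ← hC2] at hs
    have k0 : 0 ≤ κ t ^ p := Real.rpow_nonneg (hκ t).1 _
    have k1 : κ t ^ p ≤ 1 := Real.rpow_le_one (hκ t).1 (hκ t).2 (by linarith)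
    simp only [integral_const_mul]
    have hs2 := mul_le_mul_of_nonneg_left hs k0
    have hs3 : κ t ^ p * K ≤ 1 * K := mul_le_mul_of_nonneg_right k1 hK0
    rw [hK] at hs3 ⊢
    linarith
  have hfin : volume (Icc (0:ℝ) T) ≠ ⊤ := isCompact_Icc.measure_lt_top.ne
  have iK : IntegrableOn (fun _ : ℝ => K) (Icc (0:ℝ) T) := integrableOn_const hfin
  have hint := setIntegral_mono_on (iot (2 * R) cF)
    ((((iot (4 * R) cH).add (iot (4 * R) cF)).const_mul (N * (4 * A) * C2 * R ^ α)).add iK)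
    measurableSet_Icc hmain
  refine hint.trans (le_of_eq ?_)
  have e1 := integral_add (((iot (4 * R) cH).add (iot (4 * R) cF)).const_mul
    (N * (4 * A) * C2 * R ^ α)) iK
  have e2 := integral_add (iot (4 * R) cH) (iot (4 * R) cF)
  simp only [Pi.add_apply] at e1 e2 ⊢
  rw [e1, integral_const_mul, e2, setIntegral_const]
  simp [Measure.real, hT.le]

end
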